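/- arXiv:1702.05079 — 2 statements merged into one kernel-verified Lean document; each statement's English description precedes it below -/
import Mathlib

section
/- Let (A, Con, ⊢, Δ) be an information system with witnesses satisfying condition (BC): for all finite X ⊆ A and i, j ∈ A with (i,X), (j,X) ∈ Con, one has (i,X) ⊢ a ⇔ (j,X) ⊢ a for all a ∈ A. Then the L-domain of states |A| is bounded-complete: every consistent (upper-bounded) subset of |A| has a least upper bound. -/
/-!
Under the hypothesis on witnesses, whether a finite set `X` entails `a` does not depend on the
witness chosen for `X`. So for a family `B` of states with union `U`, the least upper bound is
forced to be the set of all tokens entailed by some finite subset of `U` (`IWS.closure`).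
An upper bound `z` makes every finite subset of `U` consistent for some witness in `z`, hence
finitely many tokens of the closure are entailed by a single finite subset of `U` under a single
witness (`IWS.exists_common_premise`). The three state conditions then follow from the axioms of
interpolation and of existence of entailed witnesses. Minimality holds because every state
containing `U` is closed under entailment.
-/

/-- The way-below (approximation) relation in a preorder: `x` approximates `y` if
for every directed set `S` whose least upper bound exists, `y ≤ sup S` implies
`x ≤ u` for some `u ∈ S`. -/
def wayBelow {α : Type*} [Preorder α] (x y : α) : Prop :=
  ∀ S : Set α, DirectedOn (· ≤ ·) S → S.Nonempty →
    ∀ l, IsLUB S l → y ≤ l → ∃ u ∈ S, x ≤ u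

/-- Information system with witnesses (Definition 3.1). -/
structure IWS (A : Type*) where
  Δ : A
  Con : A → Finset A → Prop
  ent : A → Finset A → A → Prop
  entCon : ∀ i X a, ent i X a → Con i X
  ax1 : ∀ i, Con i {i}
  ax2 : ∀ i X Y, Y ⊆ X → Con i X → Con i Y
  ax3 : ∀ i, ent i ∅ Δ
  ax4 : ∀ i X Y, Con i X → (∀ a ∈ Y, ent i X a) → Con i Y
  ax5 : ∀ i X Y a, Con i X → Con i Y → X ⊆ Y → ent i X a → ent i Y a
  ax6 : ∀ i X Y a, Con i X → (∀ b ∈ Y, ent i X b) → ent i Y a → ent i X a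
  ax7 : ∀ i X a, ent i X a → ∃ Z, Con i Z ∧ (∀ z ∈ Z, ent i X z) ∧ ent i Z a
  ax8 : ∀ i X Y, Con i X → (∀ y ∈ Y, ent i X y) → ∃ e, ent i X e ∧ Con e Y
  ax9 : ∀ i j, Con j {i} → ∀ X, Con i X → Con j X
  ax10 : ∀ i j X a, Con j {i} → Con i X → ent i X a → ent j X a
  ax11 : ∀ i j X a, Con j {i} → Con i X → ent j X a → ent i X a

namespace IWS

variable {A : Type*}

/-- A state of an information system with witnesses (Definition 3.5):
finitely consistent, entailment-closed and derivable. -/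
def state (S : IWS A) (x : Set A) : Prop :=
  (∀ F : Finset A, ↑F ⊆ x → ∃ i ∈ x, S.Con i F) ∧
  (∀ i ∈ x, ∀ X : Finset A, ↑X ⊆ x → ∀ a, S.Con i X → S.ent i X a → a ∈ x) ∧
  (∀ a ∈ x, ∃ i ∈ x, ∃ X : Finset A, ↑X ⊆ x ∧ S.Con i X ∧ S.ent i X a)

/-- X-equivalence of witnesses (Definition 5.1). -/
def weq (S : IWS A) (X : Finset A) (i j : A) : Prop :=
  ∃ (n : ℕ) (a k : ℕ → A), a 0 = i ∧ a n = j ∧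
    ∀ ν, 1 ≤ ν → ν ≤ n →
      S.Con (a (ν - 1)) X ∧ S.Con (a ν) X ∧
      S.Con (k ν) {a (ν - 1)} ∧ S.Con (k ν) {a ν}

end IWS

/-- Approximable mappings between information systems with witnesses (Definition 4.1). -/
structure AppMap {A A' : Type*} (S : IWS A) (S' : IWS A') where
  rel : A → Finset A → A' → Prop
  relCon : ∀ i X b, rel i X b → S.Con i X
  am1 : rel S.Δ ∅ S'.Δ
  am2 : ∀ i X X' b, S.Con i X → S.Con i X' → X ⊆ X' → rel i X b → rel i X' b
  am3 : ∀ i X X' b, S.Con i X → (∀ a ∈ X', S.ent i X a) → rel i X' b → rel i X b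
  am4 : ∀ i X b, S.Con i X → rel i X b →
    ∃ U, S.Con i U ∧ (∀ u ∈ U, S.ent i X u) ∧ rel i U b
  am5 : ∀ i X k Y b, S.Con i X → S'.Con k Y → rel i X k → (∀ y ∈ Y, rel i X y) →
    S'.ent k Y b → rel i X b
  am6 : ∀ i X b, S.Con i X → rel i X b →
    ∃ d V, S'.Con d V ∧ rel i X d ∧ (∀ v ∈ V, rel i X v) ∧ S'.ent d V b
  am7 : ∀ i X F, S.Con i X → (∀ c ∈ F, rel i X c) → ∃ e, rel i X e ∧ S'.Con e F
  am8 : ∀ i j X b, S.Con j {i} → S.Con i X → rel i X b → rel j X b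
  am9 : ∀ i j X b, S.Con j {i} → S.Con i X → rel j X b → rel i X b

namespace IWS

variable {A : Type*}

/-- Tokens entailed by some finite subset of `U`, for some witness. -/
def closure (S : IWS A) (U : Set A) : Set A :=
  {a | ∃ (i : A) (X : Finset A), ↑X ⊆ U ∧ S.ent i X a}

/-- Entailment of `a` from `X` does not depend on the consistency witness of `X`. -/
def WitnessFree (S : IWS A) : Prop :=
  ∀ (X : Finset A) i j, S.Con i X → S.Con j X → ∀ a, S.ent i X a ↔ S.ent j X a

theorem closure_subset_of_state (S : IWS A) (hbc : S.WitnessFree) {U z : Set A}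
    (hz : S.state z) (hU : U ⊆ z) : S.closure U ⊆ z := by
  rintro a ⟨i, X, hX, ha⟩
  obtain ⟨j, hj, hjX⟩ := hz.1 X (hX.trans hU)
  exact hz.2.1 j hj X (hX.trans hU) a hjX
    ((hbc X i j (S.entCon _ _ _ ha) hjX a).1 ha)

/-- Finitely many tokens of the closure are entailed by one finite subset of `U` under one
witness: take the union of the individual premises, which is consistent inside the state `z`. -/
theorem exists_common_premise (S : IWS A) (hbc : S.WitnessFree) {U z : Set A}
    (hz : S.state z) (hU : U ⊆ z) (F : Finset A) (hF : ↑F ⊆ S.closure U) :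
    ∃ (i : A) (X : Finset A), ↑X ⊆ U ∧ S.Con i X ∧ ∀ f ∈ F, S.ent i X f := by
  classical
  choose! w P hPU hP using (fun f (hf : f ∈ F) => hF (Finset.mem_coe.2 hf))
  have hXU : (↑(F.biUnion P) : Set A) ⊆ U := by
    intro a ha
    obtain ⟨f, hf, haf⟩ := Finset.mem_biUnion.1 (Finset.mem_coe.1 ha)
    exact hPU f hf haf
  obtain ⟨i, -, hi⟩ := hz.1 _ (hXU.trans hU)
  refine ⟨i, F.biUnion P, hXU, hi, fun f hf => ?_⟩
  have hsub : P f ⊆ F.biUnion P := Finset.subset_biUnion_of_mem P hf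
  have hc : S.Con i (P f) := S.ax2 _ _ _ hsub hi
  exact S.ax5 _ _ _ _ hc hi hsub ((hbc _ _ _ (S.entCon _ _ _ (hP f hf)) hc f).1 (hP f hf))

theorem state_closure (S : IWS A) (hbc : S.WitnessFree) {U z : Set A}
    (hz : S.state z) (hU : U ⊆ z) : S.state (S.closure U) := by
  refine ⟨fun F hF => ?_, fun i _ X hX a hiX ha => ?_, ?_⟩
  · obtain ⟨i, X, hXU, hi, hX⟩ := S.exists_common_premise hbc hz hU F hF
    obtain ⟨e, he, heF⟩ := S.ax8 i X F hi hX
    exact ⟨e, ⟨i, X, hXU, he⟩, heF⟩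
  · obtain ⟨j, Y, hYU, hj, hY⟩ := S.exists_common_premise hbc hz hU X hX
    have hjX : S.Con j X := S.ax4 _ _ _ hj hY
    exact ⟨j, Y, hYU, S.ax6 _ _ _ _ hj hY ((hbc X i j hiX hjX a).1 ha)⟩
  · rintro a ⟨i, X, hXU, ha⟩
    obtain ⟨Z, hiZ, hZ, hZa⟩ := S.ax7 _ _ _ ha
    obtain ⟨e, he, heZ⟩ := S.ax8 i X Z (S.entCon _ _ _ ha) hZ
    exact ⟨e, ⟨i, X, hXU, he⟩, Z, fun z hz => ⟨i, X, hXU, hZ z hz⟩, heZ,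
      (hbc Z i e hiZ heZ a).1 hZa⟩

end IWS

/-- Theorem 3.12: condition (BC) implies that the domain of states is
bounded-complete. -/
theorem BC_boundedComplete {A : Type*} (S : IWS A)
    (hbc : ∀ (X : Finset A) i j, S.Con i X → S.Con j X →
      ∀ a, S.ent i X a ↔ S.ent j X a) :
    ∀ B : Set {x : Set A // S.state x},
      (∃ ub, ∀ x ∈ B, x ≤ ub) → ∃ l, IsLUB B l := by
  rintro B ⟨z, hz⟩
  have key : ∀ w : {x : Set A // S.state x}, (∀ x ∈ B, x ≤ w) → (⋃ x ∈ B, x.1) ⊆ w.1 :=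
    fun w hw => Set.iUnion₂_subset fun x hx => hw x hx
  refine ⟨⟨S.closure (⋃ x ∈ B, x.1), S.state_closure hbc z.2 (key z hz)⟩, ?_, ?_⟩
  · intro x hx a ha
    obtain ⟨i, -, X, hX, -, hXa⟩ := x.2.2.2 a ha
    exact ⟨i, X, fun b hb => Set.mem_iUnion₂.2 ⟨x, hx, hX hb⟩, hXa⟩
  · intro w hw
    exact S.closure_subset_of_state hbc w.2 (key w fun x hx => hw hx)
end

section
/- Let D and D' be L-domains. Then the set [D → D'] of Scott continuous functions from D to D', ordered pointwise, is again an L-domain; in particular, for f ≤ g in [D → D'] bounded by h, the least upper bound of f and g below h is computed pointwise via local suprema: (f ⊔^h g)(x) = f(x) ⊔^{h(x)} g(x). -/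
/-- Scott continuity. -/
def ScottCont {D D' : Type*} [Preorder D] [Preorder D'] (f : D → D') : Prop :=
  Monotone f ∧ ∀ Sd : Set D, DirectedOn (· ≤ ·) Sd → Sd.Nonempty →
    ∀ l, IsLUB Sd l → IsLUB (f '' Sd) (f l)

/-- An L-domain: a pointed directed-complete partial order which is continuous
(has a basis) and in which every pair bounded by z has a least upper bound
in the principal ideal of z. -/
def IsLDomain (D : Type*) [PartialOrder D] : Prop :=
  (∀ Sd : Set D, DirectedOn (· ≤ ·) Sd → Sd.Nonempty → ∃ l, IsLUB Sd l) ∧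
  (∃ bot : D, ∀ x, bot ≤ x) ∧
  (∃ B : Set D, ∀ x, ∃ Sd ⊆ {u ∈ B | wayBelow u x},
    Sd.Nonempty ∧ DirectedOn (· ≤ ·) Sd ∧ IsLUB Sd x) ∧
  (∀ x y z : D, x ≤ z → y ≤ z → ∃ w, IsLeast {v | v ≤ z ∧ x ≤ v ∧ y ≤ v} w)

section Helpers

variable {D D' : Type*} [PartialOrder D] [PartialOrder D']

theorem wayBelow_le {a x : D} (h : wayBelow a x) : a ≤ x := by
  obtain ⟨u, hu, hau⟩ := h {x} (directedOn_singleton x) ⟨x, rfl⟩ x isLUB_singleton le_rfl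
  rw [Set.mem_singleton_iff] at hu
  exact hu ▸ hau

theorem wayBelow_mono {a x y : D} (h : wayBelow a x) (hxy : x ≤ y) : wayBelow a y :=
  fun S hS hne l hl hyl => h S hS hne l hl (hxy.trans hyl)

theorem wayBelow_of_le {a b x : D} (hab : a ≤ b) (h : wayBelow b x) : wayBelow a x := by
  intro S hS hne l hl hyl
  obtain ⟨u, hu, hbu⟩ := h S hS hne l hl hyl
  exact ⟨u, hu, hab.trans hbu⟩

/-- In a continuous poset the set of *all* approximants of `x`, not just a chosen subset, is
directed with supremum `x`. -/
theorem approximants_directed (hD : IsLDomain D) (x : D) :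
    {u | wayBelow u x}.Nonempty ∧ DirectedOn (· ≤ ·) {u | wayBelow u x} ∧
      IsLUB {u | wayBelow u x} x := by
  obtain ⟨B, hB⟩ := hD.2.2.1
  obtain ⟨S, hSB, hne, hdir, hlub⟩ := hB x
  refine ⟨hne.mono fun u hu => (hSB hu).2, ?_, fun u hu => wayBelow_le hu,
    fun b hb => hlub.2 fun u hu => hb (hSB hu).2⟩
  intro y hy z hz
  obtain ⟨u, hu, hyu⟩ := hy S hdir hne x hlub le_rfl
  obtain ⟨v, hv, hzv⟩ := hz S hdir hne x hlub le_rfl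
  obtain ⟨w, hw, huw, hvw⟩ := hdir u hu v hv
  exact ⟨w, (hSB hw).2, hyu.trans huw, hzv.trans hvw⟩

/-- Interpolation: `{x | a ≪ x}` is inaccessible by directed suprema. -/
theorem wayBelow_isLUB (hD : IsLDomain D) {a l : D} (h : wayBelow a l) {S : Set D}
    (hS : DirectedOn (· ≤ ·) S) (hne : S.Nonempty) (hl : IsLUB S l) :
    ∃ u ∈ S, wayBelow a u := by
  -- The approximants of members of `S` form a directed set with the same supremum as `S`.
  have key : ∃ t ∈ {t | ∃ u ∈ S, wayBelow t u}, a ≤ t := by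
    refine h _ ?_ ?_ l ?_ le_rfl
    · rintro y ⟨u, hu, hyu⟩ z ⟨v, hv, hzv⟩
      obtain ⟨w, hw, huw, hvw⟩ := hS u hu v hv
      obtain ⟨t, ht, hyt, hzt⟩ := (approximants_directed hD w).2.1 y (wayBelow_mono hyu huw)
        z (wayBelow_mono hzv hvw)
      exact ⟨t, ⟨w, hw, ht⟩, hyt, hzt⟩
    · obtain ⟨u, hu⟩ := hne
      obtain ⟨t, ht⟩ := (approximants_directed hD u).1
      exact ⟨t, u, hu, ht⟩
    · refine ⟨?_, fun b hb => hl.2 fun u hu => ?_⟩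
      · rintro t ⟨u, hu, htu⟩
        exact (wayBelow_le htu).trans (hl.1 hu)
      · exact (approximants_directed hD u).2.2.2 fun t ht => hb ⟨u, hu, ht⟩
  obtain ⟨t, ⟨u, hu, htu⟩, hat⟩ := key
  exact ⟨u, hu, wayBelow_of_le hat htu⟩

/-- A local supremum does not change when its bound is enlarged, so it is below every upper bound
that is itself dominated by some `k ≥ z`. -/
theorem local_sup_le
    (hloc : ∀ x y z : D, x ≤ z → y ≤ z → ∃ w, IsLeast {v | v ≤ z ∧ x ≤ v ∧ y ≤ v} w)
    {x y z w k v : D}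
    (hw : IsLeast {v | v ≤ z ∧ x ≤ v ∧ y ≤ v} w) (hzk : z ≤ k)
    (hvk : v ≤ k) (hxv : x ≤ v) (hyv : y ≤ v) : w ≤ v := by
  obtain ⟨⟨hwz, hxw, hyw⟩, hmin⟩ := hw
  obtain ⟨w', ⟨-, hxw', hyw'⟩, hmin'⟩ := hloc x y k (hxv.trans hvk) (hyv.trans hvk)
  exact (hmin ⟨(hmin' ⟨hwz.trans hzk, hxw, hyw⟩).trans hwz, hxw', hyw'⟩).trans
    (hmin' ⟨hvk, hxv, hyv⟩)

/-- The approximants of `f` are closed under suprema local to `f`. -/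
theorem wayBelow_local_sup
    (hloc : ∀ x y z : D, x ≤ z → y ≤ z → ∃ w, IsLeast {v | v ≤ z ∧ x ≤ v ∧ y ≤ v} w)
    {s t f w : D} (hs : wayBelow s f) (ht : wayBelow t f)
    (hw : IsLeast {v | v ≤ f ∧ s ≤ v ∧ t ≤ v} w) : wayBelow w f := by
  intro S hS hne k hk hfk
  obtain ⟨u, hu, hsu⟩ := hs S hS hne k hk hfk
  obtain ⟨v, hv, htv⟩ := ht S hS hne k hk hfk
  obtain ⟨g, hg, hug, hvg⟩ := hS u hu v hv
  exact ⟨g, hg, local_sup_le hloc hw hfk (hk.1 hg) (hsu.trans hug) (htv.trans hvg)⟩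

/-- A directed set of Scott continuous functions has a supremum computed pointwise. -/
theorem exists_pointwise_sup (hD' : IsLDomain D') (S : Set {f : D → D' // ScottCont f})
    (hS : DirectedOn (· ≤ ·) S) (hne : S.Nonempty) :
    ∃ l : {f : D → D' // ScottCont f}, IsLUB S l ∧
      ∀ x, IsLUB ((fun f : {f : D → D' // ScottCont f} => f.1 x) '' S) (l.1 x) := by
  have hdir : ∀ x, DirectedOn (· ≤ ·)
      ((fun f : {f : D → D' // ScottCont f} => f.1 x) '' S) := by
    rintro x _ ⟨f, hf, rfl⟩ _ ⟨g, hg, rfl⟩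
    obtain ⟨k, hk, hfk, hgk⟩ := hS f hf g hg
    exact ⟨k.1 x, ⟨k, hk, rfl⟩, hfk x, hgk x⟩
  choose l hl using fun x => hD'.1 _ (hdir x) (hne.image _)
  have hmono : Monotone l := by
    intro x y hxy
    refine (hl x).2 ?_
    rintro _ ⟨f, hf, rfl⟩
    exact (f.2.1 hxy).trans ((hl y).1 ⟨f, hf, rfl⟩)
  have hcont : ScottCont l := by
    refine ⟨hmono, fun T hT hTne t ht => ⟨?_, fun b hb => (hl t).2 ?_⟩⟩
    · rintro _ ⟨u, hu, rfl⟩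
      exact hmono (ht.1 hu)
    · rintro _ ⟨f, hf, rfl⟩
      refine (f.2.2 T hT hTne t ht).2 ?_
      rintro _ ⟨u, hu, rfl⟩
      exact ((hl u).1 ⟨f, hf, rfl⟩).trans (hb ⟨u, hu, rfl⟩)
  refine ⟨⟨l, hcont⟩, ⟨fun f hf x => (hl x).1 ⟨f, hf, rfl⟩, fun b hb x => (hl x).2 ?_⟩, hl⟩
  rintro _ ⟨f, hf, rfl⟩
  exact hb hf x

theorem isLUB_apply (hD' : IsLDomain D') {S : Set {f : D → D' // ScottCont f}}
    (hS : DirectedOn (· ≤ ·) S) (hne : S.Nonempty) {l : {f : D → D' // ScottCont f}}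
    (hl : IsLUB S l) (x : D) :
    IsLUB ((fun f : {f : D → D' // ScottCont f} => f.1 x) '' S) (l.1 x) := by
  obtain ⟨m, hm, hpt⟩ := exists_pointwise_sup hD' S hS hne
  exact hl.unique hm ▸ hpt x

/-- The pointwise local supremum `x ↦ f x ⊔^{h x} g x` is Scott continuous. -/
theorem exists_pointwise_local_sup (hD' : IsLDomain D') (f g h : {f : D → D' // ScottCont f})
    (hf : f ≤ h) (hg : g ≤ h) :
    ∃ l : {f : D → D' // ScottCont f},
      IsLeast {v : {f : D → D' // ScottCont f} | v ≤ h ∧ f ≤ v ∧ g ≤ v} l ∧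
      ∀ x, IsLeast {v : D' | v ≤ h.1 x ∧ f.1 x ≤ v ∧ g.1 x ≤ v} (l.1 x) := by
  choose l hl using fun x => hD'.2.2.2 (f.1 x) (g.1 x) (h.1 x) (hf x) (hg x)
  have hmono : Monotone l := fun x y hxy =>
    local_sup_le hD'.2.2.2 (hl x) (h.2.1 hxy) (hl y).1.1
      ((f.2.1 hxy).trans (hl y).1.2.1) ((g.2.1 hxy).trans (hl y).1.2.2)
  have hcont : ScottCont l := by
    refine ⟨hmono, fun T hT hTne t ht => ?_⟩
    have hdir : DirectedOn (· ≤ ·) (l '' T) := by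
      rintro _ ⟨u, hu, rfl⟩ _ ⟨v, hv, rfl⟩
      obtain ⟨w, hw, huw, hvw⟩ := hT u hu v hv
      exact ⟨l w, ⟨w, hw, rfl⟩, hmono huw, hmono hvw⟩
    obtain ⟨m, hm⟩ := hD'.1 _ hdir (hTne.image _)
    have hml : m ≤ l t := by
      refine hm.2 ?_
      rintro _ ⟨u, hu, rfl⟩
      exact hmono (ht.1 hu)
    have hlm : l t ≤ m := by
      refine (hl t).2 ⟨hml.trans (hl t).1.1, (f.2.2 T hT hTne t ht).2 ?_,
        (g.2.2 T hT hTne t ht).2 ?_⟩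
      · rintro _ ⟨u, hu, rfl⟩
        exact (hl u).1.2.1.trans (hm.1 ⟨u, hu, rfl⟩)
      · rintro _ ⟨u, hu, rfl⟩
        exact (hl u).1.2.2.trans (hm.1 ⟨u, hu, rfl⟩)
    rwa [hlm.antisymm hml]
  exact ⟨⟨l, hcont⟩, ⟨⟨fun x => (hl x).1.1, fun x => (hl x).1.2.1, fun x => (hl x).1.2.2⟩,
    fun v hv x => (hl x).2 ⟨hv.1 x, hv.2.1 x, hv.2.2 x⟩⟩, hl⟩

open Classical in
/-- The step function `a ↘ b`, with value `b` on `{x | a ≪ x}` and `bot` elsewhere. -/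
noncomputable def stepFun (bot : D') (a : D) (b : D') (x : D) : D' :=
  if wayBelow a x then b else bot

theorem stepFun_le {bot : D'} (hbot : ∀ y, bot ≤ y) {a x : D} {b c : D'}
    (h : wayBelow a x → b ≤ c) : stepFun bot a b x ≤ c := by
  unfold stepFun
  split_ifs with hx
  · exact h hx
  · exact hbot c

theorem stepFun_scottCont (hD : IsLDomain D) {bot : D'} (hbot : ∀ y, bot ≤ y) (a : D) (b : D') :
    ScottCont (stepFun bot a b) := by
  have hmono : Monotone (stepFun bot a b) := fun x y hxy =>
    stepFun_le hbot fun hx => by simp [stepFun, wayBelow_mono hx hxy]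
  refine ⟨hmono, fun T hT hTne t ht => ⟨?_, fun c hc => stepFun_le hbot fun hat => ?_⟩⟩
  · rintro _ ⟨u, hu, rfl⟩
    exact hmono (ht.1 hu)
  · obtain ⟨u, hu, hau⟩ := wayBelow_isLUB hD hat hT hTne ht
    have := hc ⟨u, hu, rfl⟩
    simpa [stepFun, hau] using this

theorem stepFun_wayBelow (hD : IsLDomain D) (hD' : IsLDomain D') {bot : D'}
    (hbot : ∀ y, bot ≤ y) {a : D} {b : D'} {f : {f : D → D' // ScottCont f}}
    (hb : wayBelow b (f.1 a)) :
    wayBelow (⟨stepFun bot a b, stepFun_scottCont hD hbot a b⟩ : {f : D → D' // ScottCont f})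
      f := by
  intro S hS hne k hk hfk
  have hdir : DirectedOn (· ≤ ·)
      ((fun f : {f : D → D' // ScottCont f} => f.1 a) '' S) := by
    rintro _ ⟨u, hu, rfl⟩ _ ⟨v, hv, rfl⟩
    obtain ⟨w, hw, huw, hvw⟩ := hS u hu v hv
    exact ⟨w.1 a, ⟨w, hw, rfl⟩, huw a, hvw a⟩
  obtain ⟨_, ⟨g, hg, rfl⟩, hbg⟩ :=
    hb _ hdir (hne.image _) _ (isLUB_apply hD' hS hne hk a) (hfk a)
  exact ⟨g, hg, fun x => stepFun_le hbot fun hax => hbg.trans (g.2.1 (wayBelow_le hax))⟩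

end Helpers

/-- The space of Scott continuous functions between L-domains, with the
pointwise order, is an L-domain, and binary local least upper bounds are
computed pointwise via local suprema. -/
theorem funspace_LDomain {D D' : Type*} [PartialOrder D] [PartialOrder D']
    (hD : IsLDomain D) (hD' : IsLDomain D') :
    IsLDomain {f : D → D' // ScottCont f} ∧
    ∀ f g h : {f : D → D' // ScottCont f}, f ≤ h → g ≤ h →
      ∀ l, IsLeast {v : {f : D → D' // ScottCont f} | v ≤ h ∧ f ≤ v ∧ g ≤ v} l →
        ∀ x, IsLeast {v : D' | v ≤ h.1 x ∧ f.1 x ≤ v ∧ g.1 x ≤ v} (l.1 x) := by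
  have hloc : ∀ f g h : {f : D → D' // ScottCont f}, f ≤ h → g ≤ h →
      ∃ w, IsLeast {v | v ≤ h ∧ f ≤ v ∧ g ≤ v} w := fun f g h hf hg =>
    (exists_pointwise_local_sup hD' f g h hf hg).imp fun _ hl => hl.1
  obtain ⟨bot, hbot⟩ := hD'.2.1
  obtain ⟨botD, -⟩ := hD.2.1
  refine ⟨⟨fun S hS hne => (exists_pointwise_sup hD' S hS hne).imp fun _ hl => hl.1,
    ⟨⟨_, stepFun_scottCont hD hbot botD bot⟩, fun f x => stepFun_le hbot fun _ => hbot _⟩,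
    ⟨Set.univ, fun f => ⟨{u | wayBelow u f}, fun u hu => ⟨trivial, hu⟩, ?_, ?_,
      fun u hu => wayBelow_le hu, fun k hk x => ?_⟩⟩, hloc⟩, ?_⟩
  · obtain ⟨b, hb⟩ := (approximants_directed hD' (f.1 botD)).1
    exact ⟨_, stepFun_wayBelow hD hD' hbot hb⟩
  · intro s hs t ht
    obtain ⟨w, hw⟩ := hloc s t f (wayBelow_le hs) (wayBelow_le ht)
    exact ⟨w, wayBelow_local_sup hloc hs ht hw, hw.1.2.1, hw.1.2.2⟩
  · -- `f x` is the supremum of the values `f a` with `a ≪ x`, each of which is the supremum of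
    -- the `b ≪ f a`; the step function `a ↘ b` takes the value `b` at `x`.
    obtain ⟨hne, hdir, hlub⟩ := approximants_directed hD x
    refine (f.2.2 _ hdir hne x hlub).2 ?_
    rintro _ ⟨a, ha, rfl⟩
    refine (approximants_directed hD' (f.1 a)).2.2.2 fun b hb => ?_
    have hstep := hk (stepFun_wayBelow hD hD' hbot hb) x
    have hax : wayBelow a x := ha
    simpa [stepFun, hax] using hstep
  · intro f g h hf hg l hl x
    obtain ⟨m, hm, hpt⟩ := exists_pointwise_local_sup hD' f g h hf hg
    exact hl.unique hm ▸ hpt x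
end
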